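/- Let H be an n×n contraction (H*H ≤ I) and let q ∈ [0,1) ∪ (1,2]. Then the map (A, B) ↦ S_{H,q}(A | B) is jointly convex on pairs of n×n positive definite matrices: for positive definite A₁, A₂, B₁, B₂ and t ∈ [0,1], S_{H,q}(tA₁ + (1−t)A₂ | tB₁ + (1−t)B₂) ≤ t·S_{H,q}(A₁ | B₁) + (1−t)·S_{H,q}(A₂ | B₂). -/

import Mathlib

open Matrix ComplexOrder

/-- Matrix logarithm of a (positive definite) Hermitian matrix, via functional calculus. -/
noncomputable def mlog {n : ℕ} (A : Matrix (Fin n) (Fin n) ℂ) : Matrix (Fin n) (Fin n) ℂ :=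
  cfc Real.log A

/-- Matrix exponential of a Hermitian matrix, via functional calculus. -/
noncomputable def mexp {n : ℕ} (A : Matrix (Fin n) (Fin n) ℂ) : Matrix (Fin n) (Fin n) ℂ :=
  cfc Real.exp A

/-- Real power of a (positive definite) Hermitian matrix, via functional calculus. -/
noncomputable def mpow {n : ℕ} (A : Matrix (Fin n) (Fin n) ℂ) (p : ℝ) : Matrix (Fin n) (Fin n) ℂ :=
  cfc (fun x : ℝ => x ^ p) A

/-- Deformed logarithm `log_q x = (x^(q-1) - 1)/(q-1)`. -/
noncomputable def logq (q x : ℝ) : ℝ := (x ^ (q - 1) - 1) / (q - 1)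

/-- Deformed exponential `exp_q x = (1 + (q-1)x)^(1/(q-1))`, with `exp_1 = exp`. -/
noncomputable def expq (q x : ℝ) : ℝ :=
  if q = 1 then Real.exp x else (1 + (q - 1) * x) ^ (1 / (q - 1))

/-- Deformed logarithm of a positive definite matrix, via functional calculus. -/
noncomputable def mlogq {n : ℕ} (q : ℝ) (A : Matrix (Fin n) (Fin n) ℂ) :
    Matrix (Fin n) (Fin n) ℂ :=
  cfc (logq q) A

/-- Deformed exponential of a Hermitian matrix, via functional calculus. -/
noncomputable def mexpq {m : ℕ} (q : ℝ) (A : Matrix (Fin m) (Fin m) ℂ) :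
    Matrix (Fin m) (Fin m) ℂ :=
  cfc (expq q) A

/-- Real part of the trace. -/
noncomputable def trRe {n : ℕ} (M : Matrix (Fin n) (Fin n) ℂ) : ℝ := (Matrix.trace M).re

/-- The reduced relative entropy `S_H(A | B) = Tr[A log A - H* A H log B - A + B]`. -/
noncomputable def SH {n : ℕ} (H A B : Matrix (Fin n) (Fin n) ℂ) : ℝ :=
  trRe (A * mlog A - Hᴴ * A * H * mlog B - A + B)

/-- The reduced Tsallis relative entropy
`S_{H,q}(A | B) = Tr[A^(2-q) log_q A - H* A^(2-q) H log_q B - A + B]`. -/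
noncomputable def STq {n : ℕ} (H : Matrix (Fin n) (Fin n) ℂ) (q : ℝ)
    (A B : Matrix (Fin n) (Fin n) ℂ) : ℝ :=
  trRe (mpow A (2 - q) * mlogq q A - Hᴴ * mpow A (2 - q) * H * mlogq q B - A + B)

/-
Let `L_A` and `R_B` be left multiplication by `A` and right multiplication by `B`; they commute, and
`Re Tr(Kᴴ A^p K B^(1-p)) = ⟨K, L_A^p R_B^(1-p) K⟩`. For `c ≥ 0 < s`, completing the square gives
`⟨K, L_A² (c L_A + s R_B)⁻¹ K⟩ = max_X (2⟨X, A K⟩ - ⟨X, (c L_A + s R_B) X⟩)`, a supremum of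
functionals linear in `(A, B)`, hence jointly convex. Integrating this over the integral
representation of `x ^ p`, `0 < p < 1`, yields Lieb's concavity (`0 ≤ p ≤ 1`) and Ando's convexity
(`1 ≤ p ≤ 2`). Finally, as `H` is a contraction, `1 - H Hᴴ = C Cᴴ` for some `C`, which makes the
entropy a linear term plus `-(q-1)⁻¹ Re Tr(Kᴴ A^(2-q) K B^(q-1))` for `K = H`, and the same for
`K = C` with `B` replaced by `1`.
-/

section HilbertSchmidt

variable {m n 𝕜 : Type*} [Fintype m] [Fintype n] [RCLike 𝕜]

/-- The real Hilbert–Schmidt inner product `Re Tr(Xᴴ Y)`, as a bilinear map over `ℝ` so that it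
commutes with real combinations and finite sums in either argument. -/
noncomputable def hsInner : Matrix m n 𝕜 →ₗ[ℝ] Matrix m n 𝕜 →ₗ[ℝ] ℝ :=
  LinearMap.mk₂ ℝ (fun X Y => RCLike.re (Xᴴ * Y).trace)
    (fun X X' Y => by simp [Matrix.add_mul])
    (fun r X Y => by simp [RCLike.smul_re])
    (fun X Y Y' => by simp [Matrix.mul_add])
    (fun r X Y => by simp [RCLike.smul_re])

lemma hsInner_apply (X Y : Matrix m n 𝕜) : hsInner X Y = RCLike.re (Xᴴ * Y).trace := rfl

lemma hsInner_one_left [DecidableEq m] (X : Matrix m m 𝕜) : hsInner 1 X = RCLike.re X.trace := by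
  rw [hsInner_apply, conjTranspose_one, Matrix.one_mul]

lemma hsInner_comm (X Y : Matrix m n 𝕜) : hsInner X Y = hsInner Y X := by
  rw [hsInner_apply, hsInner_apply, ← conjTranspose_conjTranspose (Xᴴ * Y), trace_conjTranspose,
    RCLike.star_def, RCLike.conj_re, conjTranspose_mul, conjTranspose_conjTranspose]

lemma hsInner_mul_left {A : Matrix m m 𝕜} (hA : A.IsHermitian) (X Y : Matrix m n 𝕜) :
    hsInner X (A * Y) = hsInner (A * X) Y := by
  rw [hsInner_apply, hsInner_apply, conjTranspose_mul, hA.eq, Matrix.mul_assoc]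

lemma hsInner_mul_right {B : Matrix n n 𝕜} (hB : B.IsHermitian) (X Y : Matrix m n 𝕜) :
    hsInner X (Y * B) = hsInner (X * B) Y := by
  rw [hsInner_apply, hsInner_apply, conjTranspose_mul, hB.eq, ← Matrix.mul_assoc, trace_mul_comm,
    ← Matrix.mul_assoc]

lemma hsInner_mul_self (A : Matrix m m 𝕜) (X : Matrix m n 𝕜) :
    hsInner X (A * X) = RCLike.re (A * (X * Xᴴ)).trace := by
  rw [hsInner_apply, trace_mul_comm, Matrix.mul_assoc]

lemma hsInner_self_mul_left_nonneg {A : Matrix m m 𝕜} (hA : A.PosSemidef) (X : Matrix m n 𝕜) :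
    0 ≤ hsInner X (A * X) := by
  rw [hsInner_apply, ← Matrix.mul_assoc]
  exact (RCLike.nonneg_iff.1 (hA.conjTranspose_mul_mul_same X).trace_nonneg).1

lemma hsInner_self_mul_right_nonneg {B : Matrix n n 𝕜} (hB : B.PosSemidef) (X : Matrix m n 𝕜) :
    0 ≤ hsInner X (X * B) := by
  rw [hsInner_apply, trace_mul_comm]
  exact (RCLike.nonneg_iff.1 (hB.mul_mul_conjTranspose_same X).trace_nonneg).1

/-- The Sylvester operator `X ↦ A X + X B`. -/
def sylvester (A : Matrix m m 𝕜) (B : Matrix n n 𝕜) : Matrix m n 𝕜 →ₗ[ℝ] Matrix m n 𝕜 where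
  toFun X := A * X + X * B
  map_add' X Y := by rw [Matrix.mul_add, Matrix.add_mul, add_add_add_comm]
  map_smul' r X := by simp

lemma sylvester_apply (A : Matrix m m 𝕜) (B : Matrix n n 𝕜) (X : Matrix m n 𝕜) :
    sylvester A B X = A * X + X * B := rfl

lemma hsInner_sylvester_comm {A : Matrix m m 𝕜} {B : Matrix n n 𝕜} (hA : A.IsHermitian)
    (hB : B.IsHermitian) (X Y : Matrix m n 𝕜) :
    hsInner X (sylvester A B Y) = hsInner Y (sylvester A B X) := by
  rw [hsInner_comm Y, sylvester_apply, sylvester_apply, map_add, map_add, LinearMap.add_apply,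
    hsInner_mul_left hA, hsInner_mul_right hB]

lemma hsInner_self_sylvester_nonneg {A : Matrix m m 𝕜} {B : Matrix n n 𝕜} (hA : A.PosSemidef)
    (hB : B.PosSemidef) (X : Matrix m n 𝕜) : 0 ≤ hsInner X (sylvester A B X) := by
  rw [sylvester_apply, map_add]
  exact add_nonneg (hsInner_self_mul_left_nonneg hA X) (hsInner_self_mul_right_nonneg hB X)

lemma two_mul_hsInner_sylvester_sub_le {A : Matrix m m 𝕜} {B : Matrix n n 𝕜} (hA : A.PosSemidef)
    (hB : B.PosSemidef) (X Y : Matrix m n 𝕜) :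
    2 * hsInner X (sylvester A B Y) - hsInner X (sylvester A B X) ≤
      hsInner Y (sylvester A B Y) := by
  have h := hsInner_self_sylvester_nonneg hA hB (X - Y)
  simp only [map_sub, LinearMap.sub_apply, hsInner_sylvester_comm hA.1 hB.1 Y X] at h
  linarith

end HilbertSchmidt

section PosDefCone

variable {m n 𝕜 : Type*} [Fintype m] [Fintype n] [RCLike 𝕜]

/-- The cone of positive definite matrices, whose products are the domains of the convexity
statements. -/
def posDefCone (m 𝕜 : Type*) [Fintype m] [RCLike 𝕜] : Set (Matrix m m 𝕜) := {A | A.PosDef}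

lemma convex_posDefCone : Convex ℝ (posDefCone m 𝕜) :=
  convex_iff_forall_pos.2 fun _ hA _ hB _ _ hs ht _ => (PosDef.smul hA hs).add (PosDef.smul hB ht)

lemma convex_posDefCone_prod : Convex ℝ (posDefCone m 𝕜 ×ˢ posDefCone n 𝕜) :=
  convex_posDefCone.prod convex_posDefCone

open MatrixOrder in
lemma exists_mul_conjTranspose_eq {M : Matrix m m 𝕜} (hM : M.PosSemidef) :
    ∃ C : Matrix m m 𝕜, C * Cᴴ = M := by
  classical
  obtain ⟨C, rfl⟩ := CStarAlgebra.nonneg_iff_eq_star_mul_self.mp hM.nonneg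
  exact ⟨Cᴴ, by rw [conjTranspose_conjTranspose, star_eq_conjTranspose]⟩

end PosDefCone

lemma convexOn_of_isLUB {E ι : Type*} [AddCommGroup E] [Module ℝ E] {s : Set E} {F : E → ℝ}
    {g : ι → E → ℝ} (hs : Convex ℝ s) (hg : ∀ i, ConvexOn ℝ s (g i))
    (hF : ∀ x ∈ s, IsLUB (Set.range fun i => g i x) (F x)) : ConvexOn ℝ s F := by
  refine ⟨hs, fun x hx y hy a b ha hb hab => (hF _ (hs hx hy ha hb hab)).2 ?_⟩
  rintro _ ⟨i, rfl⟩
  calc g i (a • x + b • y) ≤ a • g i x + b • g i y := (hg i).2 hx hy ha hb hab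
    _ ≤ a • F x + b • F y := by
      gcongr
      exacts [(hF x hx).1 ⟨i, rfl⟩, (hF y hy).1 ⟨i, rfl⟩]

section LeftRightCalculus

variable {m n 𝕜 : Type*} [Fintype m] [Fintype n] [DecidableEq m] [DecidableEq n] [RCLike 𝕜]

/-- The spectral projection of a Hermitian matrix at the real number `a`; it is zero when `a` is
not an eigenvalue. -/
noncomputable def spectralProj (A : Matrix m m 𝕜) (a : ℝ) : Matrix m m 𝕜 := cfc (Pi.single a 1) A

lemma continuousOn_spectrum (φ : ℝ → ℝ) (A : Matrix m m 𝕜) : ContinuousOn φ (spectrum ℝ A) :=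
  A.finite_real_spectrum.continuousOn φ

lemma cfc_eq_sum_spectralProj (φ : ℝ → ℝ) (A : Matrix m m 𝕜) :
    cfc φ A = ∑ a ∈ A.finite_real_spectrum.toFinset, φ a • spectralProj A a := by
  simp only [spectralProj, ← cfc_smul _ _ A (continuousOn_spectrum _ A)]
  rw [← cfc_sum _ _ _ fun _ _ => continuousOn_spectrum _ A]
  refine cfc_congr fun x hx => ?_
  simp [Finset.sum_apply, Pi.single_apply, hx]

lemma mul_spectralProj {A : Matrix m m 𝕜} (hA : A.IsHermitian) (a : ℝ) :
    A * spectralProj A a = a • spectralProj A a := by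
  nth_rw 1 [spectralProj, ← cfc_id' ℝ A hA.isSelfAdjoint]
  rw [← cfc_mul _ _ A (continuousOn_spectrum _ A) (continuousOn_spectrum _ A), spectralProj,
    ← cfc_smul _ _ A (continuousOn_spectrum _ A)]
  refine cfc_congr fun x _ => ?_
  by_cases h : x = a <;> simp [h]

lemma spectralProj_mul {A : Matrix m m 𝕜} (hA : A.IsHermitian) (a : ℝ) :
    spectralProj A a * A = a • spectralProj A a := by
  rw [← mul_spectralProj hA]
  exact ((Commute.refl A).cfc_real _).eq

/-- The joint functional calculus `f(L_A, R_B) K` of the commuting operators of left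
multiplication by `A` and right multiplication by `B`, for Hermitian `A` and `B`, written out as
`∑ f(a, b) P_a K Q_b` over the spectral projections of `A` and `B`. -/
noncomputable def leftRightCFC (f : ℝ → ℝ → ℝ) (A : Matrix m m 𝕜) (B : Matrix n n 𝕜)
    (K : Matrix m n 𝕜) : Matrix m n 𝕜 :=
  ∑ a ∈ A.finite_real_spectrum.toFinset, ∑ b ∈ B.finite_real_spectrum.toFinset,
    f a b • (spectralProj A a * K * spectralProj B b)

lemma leftRightCFC_mul (φ ψ : ℝ → ℝ) (A : Matrix m m 𝕜) (B : Matrix n n 𝕜) (K : Matrix m n 𝕜) :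
    leftRightCFC (fun a b => φ a * ψ b) A B K = cfc φ A * K * cfc ψ B := by
  simp only [cfc_eq_sum_spectralProj, leftRightCFC, Matrix.sum_mul, Matrix.mul_sum,
    Matrix.smul_mul, Matrix.mul_smul, Finset.smul_sum, smul_smul]
  rw [Finset.sum_comm]
  simp only [mul_comm]

lemma leftRightCFC_congr {f g : ℝ → ℝ → ℝ} {A : Matrix m m 𝕜} {B : Matrix n n 𝕜}
    (h : ∀ a ∈ spectrum ℝ A, ∀ b ∈ spectrum ℝ B, f a b = g a b) (K : Matrix m n 𝕜) :
    leftRightCFC f A B K = leftRightCFC g A B K := by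
  refine Finset.sum_congr rfl fun a ha => Finset.sum_congr rfl fun b hb => ?_
  rw [h a (by simpa using ha) b (by simpa using hb)]

lemma mul_leftRightCFC (f : ℝ → ℝ → ℝ) {A : Matrix m m 𝕜} (hA : A.IsHermitian)
    (B : Matrix n n 𝕜) (K : Matrix m n 𝕜) :
    A * leftRightCFC f A B K = leftRightCFC (fun a b => a * f a b) A B K := by
  simp only [leftRightCFC, Matrix.mul_sum, Matrix.mul_smul, ← Matrix.mul_assoc, mul_spectralProj hA,
    Matrix.smul_mul, smul_smul, mul_comm]

lemma leftRightCFC_mul_right (f : ℝ → ℝ → ℝ) (A : Matrix m m 𝕜) {B : Matrix n n 𝕜}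
    (hB : B.IsHermitian) (K : Matrix m n 𝕜) :
    leftRightCFC f A B K * B = leftRightCFC (fun a b => f a b * b) A B K := by
  simp only [leftRightCFC, Matrix.sum_mul, Matrix.smul_mul, Matrix.mul_assoc, spectralProj_mul hB,
    Matrix.mul_smul, smul_smul]

lemma spectrum_pos_of_posDef {A : Matrix m m 𝕜} (hA : A.PosDef) {a : ℝ}
    (ha : a ∈ spectrum ℝ A) : 0 < a := by
  open MatrixOrder in exact hA.isStrictlyPositive.spectrum_pos ha

lemma sylvester_leftRightCFC {c s : ℝ} (hc : 0 ≤ c) (hs : 0 < s) {A : Matrix m m 𝕜}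
    {B : Matrix n n 𝕜} (hA : A.PosDef) (hB : B.PosDef) (K : Matrix m n 𝕜) :
    sylvester (c • A) (s • B) (leftRightCFC (fun a b => a / (c * a + s * b)) A B K) = A * K := by
  calc _ = leftRightCFC (fun a b =>
        c * (a * (a / (c * a + s * b))) + s * (a / (c * a + s * b) * b)) A B K := by
        rw [sylvester_apply, Matrix.smul_mul, Matrix.mul_smul, mul_leftRightCFC _ hA.1,
          leftRightCFC_mul_right _ _ hB.1]
        simp only [leftRightCFC, Finset.smul_sum, smul_smul, add_smul, Finset.sum_add_distrib]
    _ = leftRightCFC (fun a _ => a * 1) A B K := by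
        refine leftRightCFC_congr (fun a ha b hb => ?_) K
        have ha := spectrum_pos_of_posDef hA ha
        have hb := spectrum_pos_of_posDef hB hb
        have : 0 < c * a + s * b := by positivity
        field_simp
    _ = A * K := by
        rw [leftRightCFC_mul (fun a => a) (fun _ => 1), cfc_id' ℝ A hA.1.isSelfAdjoint,
          cfc_const_one ℝ B hB.1.isSelfAdjoint, Matrix.mul_one]

/-- The quadratic form `⟨K, f(L_A, R_B) K⟩`, as a function of the pair `P = (A, B)`. -/
noncomputable def leftRightForm (f : ℝ → ℝ → ℝ) (K : Matrix m n 𝕜)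
    (P : Matrix m m 𝕜 × Matrix n n 𝕜) : ℝ :=
  hsInner K (leftRightCFC f P.1 P.2 K)

lemma leftRightForm_eq_sum (f : ℝ → ℝ → ℝ) (K : Matrix m n 𝕜)
    (P : Matrix m m 𝕜 × Matrix n n 𝕜) :
    leftRightForm f K P = ∑ a ∈ P.1.finite_real_spectrum.toFinset,
      ∑ b ∈ P.2.finite_real_spectrum.toFinset,
        f a b * hsInner K (spectralProj P.1 a * K * spectralProj P.2 b) := by
  simp only [leftRightForm, leftRightCFC, map_sum, map_smul, smul_eq_mul]

lemma leftRightForm_sub (f g : ℝ → ℝ → ℝ) (K : Matrix m n 𝕜)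
    (P : Matrix m m 𝕜 × Matrix n n 𝕜) :
    leftRightForm (fun a b => f a b - g a b) K P = leftRightForm f K P - leftRightForm g K P := by
  simp only [leftRightForm_eq_sum, sub_mul, Finset.sum_sub_distrib]

lemma leftRightForm_const_mul (r : ℝ) (f : ℝ → ℝ → ℝ) (K : Matrix m n 𝕜)
    (P : Matrix m m 𝕜 × Matrix n n 𝕜) :
    leftRightForm (fun a b => r * f a b) K P = r * leftRightForm f K P := by
  simp only [leftRightForm_eq_sum, Finset.mul_sum, mul_assoc]

end LeftRightCalculus

section JointConvexity

variable {m n 𝕜 : Type*} [Fintype m] [Fintype n] [DecidableEq m] [DecidableEq n] [RCLike 𝕜]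

lemma isGreatest_leftRightForm_sq_div {c s : ℝ} (hc : 0 ≤ c) (hs : 0 < s) {A : Matrix m m 𝕜}
    {B : Matrix n n 𝕜} (hA : A.PosDef) (hB : B.PosDef) (K : Matrix m n 𝕜) :
    IsGreatest (Set.range fun X => 2 * hsInner X (A * K) - hsInner X (sylvester (c • A) (s • B) X))
      (leftRightForm (fun a b => a ^ 2 / (c * a + s * b)) K (A, B)) := by
  set Y := leftRightCFC (fun a b => a / (c * a + s * b)) A B K
  have hY : sylvester (c • A) (s • B) Y = A * K := sylvester_leftRightCFC hc hs hA hB K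
  have hform : leftRightForm (fun a b => a ^ 2 / (c * a + s * b)) K (A, B) =
      hsInner Y (A * K) := by
    simp only [leftRightForm, sq, mul_div_assoc]
    rw [← mul_leftRightCFC _ hA.1, hsInner_mul_left hA.1, hsInner_comm]
  rw [hform]
  refine ⟨⟨Y, by simp only [hY]; ring⟩, ?_⟩
  rintro _ ⟨X, rfl⟩
  have h := two_mul_hsInner_sylvester_sub_le (hA.posSemidef.smul hc)
    (hB.posSemidef.smul hs.le) X Y
  rwa [hY] at h

lemma convexOn_leftRightForm_sq_div {c s : ℝ} (hc : 0 ≤ c) (hs : 0 < s) (K : Matrix m n 𝕜) :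
    ConvexOn ℝ (posDefCone m 𝕜 ×ˢ posDefCone n 𝕜)
      (leftRightForm (fun a b => a ^ 2 / (c * a + s * b)) K) := by
  refine convexOn_of_isLUB convex_posDefCone_prod (fun X => ?_) fun P hP =>
    (isGreatest_leftRightForm_sq_div hc hs hP.1 hP.2 K).isLUB
  refine ⟨convex_posDefCone_prod, fun P _ Q _ a b _ _ _ => le_of_eq ?_⟩
  simp only [sylvester_apply, Prod.fst_add, Prod.snd_add, Prod.smul_fst, Prod.smul_snd,
    Matrix.add_mul, Matrix.mul_add, Matrix.smul_mul, Matrix.mul_smul, map_add, map_smul,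
    smul_add, smul_eq_mul]
  ring

lemma leftRightForm_mul (φ ψ : ℝ → ℝ) (K : Matrix m n 𝕜) (P : Matrix m m 𝕜 × Matrix n n 𝕜) :
    leftRightForm (fun a b => φ a * ψ b) K P = hsInner K (cfc φ P.1 * K * cfc ψ P.2) := by
  rw [leftRightForm, leftRightCFC_mul]

lemma eqOn_leftRightForm {f g : ℝ → ℝ → ℝ} (h : ∀ a b, 0 < a → 0 < b → f a b = g a b)
    (K : Matrix m n 𝕜) :
    Set.EqOn (leftRightForm f K) (leftRightForm g K) (posDefCone m 𝕜 ×ˢ posDefCone n 𝕜) := by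
  intro P hP
  rw [leftRightForm, leftRightForm, leftRightCFC_congr]
  exact fun a ha b hb => h a b (spectrum_pos_of_posDef hP.1 ha) (spectrum_pos_of_posDef hP.2 hb)

lemma eqOn_leftRightForm_fst (K : Matrix m n 𝕜) :
    Set.EqOn (hsInner K ∘ₗ mulRightLinearMap m ℝ K ∘ₗ LinearMap.fst ℝ _ (Matrix n n 𝕜))
      (leftRightForm (fun a _ => a) K) (posDefCone m 𝕜 ×ˢ posDefCone n 𝕜) := by
  intro P hP
  have h := leftRightForm_mul (fun a => a) (fun _ => 1) K P
  rw [cfc_id' ℝ P.1 hP.1.1.isSelfAdjoint, cfc_const_one ℝ P.2 hP.2.1.isSelfAdjoint,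
    Matrix.mul_one] at h
  simpa using h.symm

lemma convexOn_leftRightForm_fst (K : Matrix m n 𝕜) :
    ConvexOn ℝ (posDefCone m 𝕜 ×ˢ posDefCone n 𝕜) (leftRightForm (fun a _ => a) K) :=
  (LinearMap.convexOn _ convex_posDefCone_prod).congr (eqOn_leftRightForm_fst K)

lemma concaveOn_leftRightForm_fst (K : Matrix m n 𝕜) :
    ConcaveOn ℝ (posDefCone m 𝕜 ×ˢ posDefCone n 𝕜) (leftRightForm (fun a _ => a) K) :=
  (LinearMap.concaveOn _ convex_posDefCone_prod).congr (eqOn_leftRightForm_fst K)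

lemma concaveOn_leftRightForm_snd (K : Matrix m n 𝕜) :
    ConcaveOn ℝ (posDefCone m 𝕜 ×ˢ posDefCone n 𝕜) (leftRightForm (fun _ b => b) K) := by
  have hlin : ConcaveOn ℝ (posDefCone m 𝕜 ×ˢ posDefCone n 𝕜)
      (hsInner K ∘ₗ mulLeftLinearMap n ℝ K ∘ₗ LinearMap.snd ℝ (Matrix m m 𝕜) _) :=
    LinearMap.concaveOn _ convex_posDefCone_prod
  refine hlin.congr fun P hP => ?_
  have h := leftRightForm_mul (fun _ => 1) (fun b => b) K P
  rw [cfc_id' ℝ P.2 hP.2.1.isSelfAdjoint, cfc_const_one ℝ P.1 hP.1.1.isSelfAdjoint,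
    Matrix.one_mul] at h
  simpa using h.symm

lemma concaveOn_leftRightForm_mul_div {u : ℝ} (hu : 0 < u) (K : Matrix m n 𝕜) :
    ConcaveOn ℝ (posDefCone m 𝕜 ×ˢ posDefCone n 𝕜)
      (leftRightForm (fun a b => a * b / (a + u * b)) K) := by
  have h := ((concaveOn_leftRightForm_fst K).sub
    (convexOn_leftRightForm_sq_div (n := n) zero_le_one hu K)).smul (inv_nonneg.2 hu.le)
  simp only [Pi.sub_apply, smul_eq_mul, ← leftRightForm_sub, ← leftRightForm_const_mul] at h
  refine h.congr (eqOn_leftRightForm (fun a b ha hb => ?_) K)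
  field_simp
  ring

open MeasureTheory Set Real

lemma exists_leftRightForm_mul_rpow_eq_integral {p : ℝ} (hp : p ∈ Ioo 0 1) (h : ℝ → ℝ → ℝ)
    (K : Matrix m n 𝕜) :
    ∃ μ : Measure ℝ, ∀ P ∈ posDefCone m 𝕜 ×ˢ posDefCone n 𝕜,
      IntegrableOn
        (fun u => leftRightForm (fun a b => h a b * rpowIntegrand₀₁ p u (a / b)) K P) (Ioi 0) μ ∧
      leftRightForm (fun a b => h a b * (a / b) ^ p) K P =
        ∫ u in Ioi 0, leftRightForm (fun a b => h a b * rpowIntegrand₀₁ p u (a / b)) K P ∂μ := by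
  obtain ⟨μ, hμ⟩ := exists_measure_rpow_eq_integral_rpowIntegrand₀₁ hp
  refine ⟨μ, fun P hP => ?_⟩
  have hμP : ∀ a ∈ P.1.finite_real_spectrum.toFinset, ∀ b ∈ P.2.finite_real_spectrum.toFinset,
      IntegrableOn (fun u => rpowIntegrand₀₁ p u (a / b)) (Ioi 0) μ ∧
        (a / b) ^ p = ∫ u in Ioi 0, rpowIntegrand₀₁ p u (a / b) ∂μ := fun a ha b hb =>
    hμ _ (div_pos (spectrum_pos_of_posDef hP.1 (by simpa using ha))
      (spectrum_pos_of_posDef hP.2 (by simpa using hb))).le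
  have hint : ∀ a ∈ P.1.finite_real_spectrum.toFinset, ∀ b ∈ P.2.finite_real_spectrum.toFinset,
      IntegrableOn (fun u => h a b * rpowIntegrand₀₁ p u (a / b) *
        hsInner K (spectralProj P.1 a * K * spectralProj P.2 b)) (Ioi 0) μ := fun a ha b hb =>
    ((hμP a ha b hb).1.const_mul _).mul_const _
  simp only [leftRightForm_eq_sum]
  refine ⟨integrable_finsetSum _ fun a ha => integrable_finsetSum _ (hint a ha), ?_⟩
  rw [integral_finsetSum _ fun a ha => integrable_finsetSum _ (hint a ha)]
  refine Finset.sum_congr rfl fun a ha => ?_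
  rw [integral_finsetSum _ (hint a ha)]
  refine Finset.sum_congr rfl fun b hb => ?_
  rw [integral_mul_const, integral_const_mul, (hμP a ha b hb).2]

theorem lieb_concavity {p : ℝ} (hp : p ∈ Icc 0 1) (K : Matrix m n 𝕜) :
    ConcaveOn ℝ (posDefCone m 𝕜 ×ˢ posDefCone n 𝕜) fun P =>
      hsInner K (cfc (fun x : ℝ => x ^ p) P.1 * K * cfc (fun x : ℝ => x ^ (1 - p)) P.2) := by
  simp only [← leftRightForm_mul]
  rcases hp.1.eq_or_lt with rfl | hp0
  · simpa using concaveOn_leftRightForm_snd K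
  rcases hp.2.eq_or_lt with rfl | hp1
  · simpa using concaveOn_leftRightForm_fst K
  obtain ⟨μ, hμ⟩ := exists_leftRightForm_mul_rpow_eq_integral ⟨hp0, hp1⟩ (fun _ b => b) K
  have key : ConcaveOn ℝ (posDefCone m 𝕜 ×ˢ posDefCone n 𝕜)
      (leftRightForm (fun a b => b * (a / b) ^ p) K) := by
    refine (integral_concaveOn_of_integrand_ae convex_posDefCone_prod ?_
      fun P hP => (hμ P hP).1).congr fun P hP => (hμ P hP).2.symm
    filter_upwards [ae_restrict_mem measurableSet_Ioi] with u (hu : 0 < u)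
    have h := (concaveOn_leftRightForm_mul_div hu K).smul (rpow_nonneg hu.le (p - 1))
    simp only [smul_eq_mul, ← leftRightForm_const_mul] at h
    refine h.congr (eqOn_leftRightForm (fun a b ha hb => ?_) K)
    rw [rpowIntegrand₀₁_eq_pow_div ⟨hp0, hp1⟩ hu.le (div_pos ha hb).le]
    field_simp
    ring
  refine key.congr (eqOn_leftRightForm (fun a b ha hb => ?_) K)
  rw [div_rpow ha.le hb.le, rpow_sub hb, rpow_one]
  ring

theorem ando_convexity {p : ℝ} (hp : p ∈ Icc 1 2) (K : Matrix m n 𝕜) :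
    ConvexOn ℝ (posDefCone m 𝕜 ×ˢ posDefCone n 𝕜) fun P =>
      hsInner K (cfc (fun x : ℝ => x ^ p) P.1 * K * cfc (fun x : ℝ => x ^ (1 - p)) P.2) := by
  simp only [← leftRightForm_mul]
  rcases hp.1.eq_or_lt with rfl | hp1
  · simpa using convexOn_leftRightForm_fst K
  rcases hp.2.eq_or_lt with rfl | hp2
  · refine (convexOn_leftRightForm_sq_div le_rfl one_pos K).congr
      (eqOn_leftRightForm (fun a b _ _ => ?_) K)
    rw [show (1 - 2 : ℝ) = -1 by norm_num, rpow_neg_one, rpow_two]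
    ring
  have hp' : p - 1 ∈ Ioo 0 1 := ⟨by linarith, by linarith⟩
  obtain ⟨μ, hμ⟩ := exists_leftRightForm_mul_rpow_eq_integral hp' (fun a _ => a) K
  have key : ConvexOn ℝ (posDefCone m 𝕜 ×ˢ posDefCone n 𝕜)
      (leftRightForm (fun a b => a * (a / b) ^ (p - 1)) K) := by
    refine (integral_convexOn_of_integrand_ae convex_posDefCone_prod ?_
      fun P hP => (hμ P hP).1).congr fun P hP => (hμ P hP).2.symm
    filter_upwards [ae_restrict_mem measurableSet_Ioi] with u (hu : 0 < u)
    have h := (convexOn_leftRightForm_sq_div zero_le_one hu K).smul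
      (rpow_nonneg hu.le (p - 1 - 1))
    simp only [smul_eq_mul, ← leftRightForm_const_mul] at h
    refine h.congr (eqOn_leftRightForm (fun a b ha hb => ?_) K)
    rw [rpowIntegrand₀₁_eq_pow_div hp' hu.le (div_pos ha hb).le]
    field_simp
    ring
  refine key.congr (eqOn_leftRightForm (fun a b ha hb => ?_) K)
  rw [div_rpow ha.le hb.le, rpow_sub_one ha.ne', ← neg_sub p 1, rpow_neg hb.le]
  field_simp

end JointConvexity

section Tsallis

variable {m n 𝕜 : Type*} [Fintype m] [Fintype n] [DecidableEq m] [RCLike 𝕜]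

lemma convexOn_hsInner_rpow_mul_rpow [DecidableEq n] {q : ℝ}
    (hq : q ∈ Set.Ico (0 : ℝ) 1 ∪ Set.Ioc 1 2) (K : Matrix m n 𝕜) :
    ConvexOn ℝ (posDefCone m 𝕜 ×ˢ posDefCone n 𝕜) fun P => -(q - 1)⁻¹ *
      hsInner K (cfc (fun x : ℝ => x ^ (2 - q)) P.1 * K * cfc (fun x : ℝ => x ^ (q - 1)) P.2) := by
  have hexp : q - 1 = 1 - (2 - q) := by ring
  rcases hq with ⟨h0, h1⟩ | ⟨h1, h2⟩
  · have hcoef : 0 ≤ -(q - 1)⁻¹ := neg_nonneg.2 (inv_nonpos.2 (by linarith))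
    have h := (ando_convexity (p := 2 - q) ⟨by linarith, by linarith⟩ K).smul hcoef
    rwa [← hexp] at h
  · have hcoef : 0 ≤ (q - 1)⁻¹ := inv_nonneg.2 (by linarith)
    have h := ((lieb_concavity (p := 2 - q) ⟨by linarith, by linarith⟩ K).smul hcoef).neg
    rw [← hexp] at h
    exact h.congr fun P _ => (neg_mul _ _).symm

lemma convexOn_hsInner_rpow_mul {q : ℝ} (hq : q ∈ Set.Ico (0 : ℝ) 1 ∪ Set.Ioc 1 2)
    (K : Matrix m n 𝕜) :
    ConvexOn ℝ (posDefCone m 𝕜) fun A =>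
      -(q - 1)⁻¹ * hsInner K (cfc (fun x : ℝ => x ^ (2 - q)) A * K) := by
  classical
  have h := (convexOn_hsInner_rpow_mul_rpow hq K).comp_affineMap
    ((AffineMap.id ℝ (Matrix m m 𝕜)).prod (AffineMap.const ℝ _ (1 : Matrix n n 𝕜)))
  have hone : cfc (fun x : ℝ => x ^ (q - 1)) (1 : Matrix n n 𝕜) = 1 := by
    rw [cfc_apply_one, Real.one_rpow, map_one]
  simp only [Function.comp_def, AffineMap.prod_apply, AffineMap.id_apply, AffineMap.const_apply,
    hone, Matrix.mul_one] at h
  exact h.subset (fun A hA => ⟨hA, PosDef.one⟩) convex_posDefCone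

variable [DecidableEq n]

lemma cfc_rpow_mul_cfc_rpow {A : Matrix m m 𝕜} (hA : A.PosDef) (p r : ℝ) :
    cfc (fun x : ℝ => x ^ p) A * cfc (fun x : ℝ => x ^ r) A = cfc (fun x : ℝ => x ^ (p + r)) A := by
  rw [← cfc_mul _ _ A (continuousOn_spectrum _ A) (continuousOn_spectrum _ A)]
  exact cfc_congr fun x hx => (Real.rpow_add (spectrum_pos_of_posDef hA hx) p r).symm

lemma cfc_logq (q : ℝ) {A : Matrix m m 𝕜} (hA : A.IsHermitian) :
    cfc (logq q) A = (q - 1)⁻¹ • (cfc (fun x : ℝ => x ^ (q - 1)) A - 1) := by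
  have hlog : logq q = fun x => (q - 1)⁻¹ * (x ^ (q - 1) - 1) := by
    ext x
    rw [logq, div_eq_inv_mul]
  rw [hlog, cfc_const_mul _ _ A (continuousOn_spectrum _ A),
    cfc_sub _ _ A (continuousOn_spectrum _ A) (continuousOn_spectrum _ A),
    cfc_const_one ℝ A hA.isSelfAdjoint]

lemma posSemidef_one_sub_mul_conjTranspose {H : Matrix m n 𝕜} (hH : (1 - Hᴴ * H).PosSemidef) :
    (1 - H * Hᴴ).PosSemidef := by
  let : Invertible (1 : Matrix m m 𝕜) := invertibleOne
  let : Invertible (1 : Matrix n n 𝕜) := invertibleOne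
  have h₁ := PosDef.fromBlocks₁₁ H (1 : Matrix n n 𝕜) (PosDef.one (n := m))
  have h₂ := PosDef.fromBlocks₂₂ (1 : Matrix m m 𝕜) H (PosDef.one (n := n))
  simp only [inv_one, Matrix.mul_one] at h₁ h₂
  exact h₂.1 (h₁.2 hH)

/-- The reduced Tsallis relative entropy `S_{H,q}(A | B)` for a rectangular `H`. The trace is
split because `A` and `B` may then have different sizes. -/
noncomputable def tsallisRelEntropy (H : Matrix m n 𝕜) (q : ℝ) (A : Matrix m m 𝕜)
    (B : Matrix n n 𝕜) : ℝ :=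
  RCLike.re (cfc (fun x : ℝ => x ^ (2 - q)) A * cfc (logq q) A - A).trace -
    RCLike.re (Hᴴ * cfc (fun x : ℝ => x ^ (2 - q)) A * H * cfc (logq q) B - B).trace

lemma tsallisRelEntropy_eq {H : Matrix m n 𝕜} {C : Matrix m m 𝕜} (hC : C * Cᴴ = 1 - H * Hᴴ)
    (q : ℝ) {A : Matrix m m 𝕜} {B : Matrix n n 𝕜} (hA : A.PosDef) (hB : B.IsHermitian) :
    tsallisRelEntropy H q A B = ((q - 1)⁻¹ - 1) * hsInner 1 A + hsInner 1 B +
      -(q - 1)⁻¹ * hsInner H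
        (cfc (fun x : ℝ => x ^ (2 - q)) A * H * cfc (fun x : ℝ => x ^ (q - 1)) B) +
      -(q - 1)⁻¹ * hsInner C (cfc (fun x : ℝ => x ^ (2 - q)) A * C) := by
  set Aq := cfc (fun x : ℝ => x ^ (2 - q)) A
  have hAq : Aq * cfc (fun x : ℝ => x ^ (q - 1)) A = A := by
    rw [cfc_rpow_mul_cfc_rpow hA, show 2 - q + (q - 1) = 1 by ring]
    simpa only [Real.rpow_one] using cfc_id' ℝ A hA.1.isSelfAdjoint
  have htrace : hsInner C (Aq * C) = hsInner 1 Aq - hsInner H (Aq * H) := by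
    rw [hsInner_mul_self, hC, hsInner_mul_self, Matrix.mul_sub, Matrix.mul_one, trace_sub, map_sub,
      hsInner_one_left]
  have hfst : RCLike.re (Aq * cfc (logq q) A - A).trace =
      (q - 1)⁻¹ * (hsInner 1 A - hsInner 1 Aq) - hsInner 1 A := by
    rw [cfc_logq q hA.1, ← hsInner_one_left, Matrix.mul_smul, Matrix.mul_sub, hAq, Matrix.mul_one,
      map_sub, map_smul, map_sub, smul_eq_mul]
  have hsnd : RCLike.re (Hᴴ * Aq * H * cfc (logq q) B - B).trace =
      (q - 1)⁻¹ * (hsInner H (Aq * H * cfc (fun x : ℝ => x ^ (q - 1)) B) - hsInner H (Aq * H)) -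
        hsInner 1 B := by
    rw [cfc_logq q hB, trace_sub, map_sub, hsInner_one_left, Matrix.mul_assoc Hᴴ,
      Matrix.mul_assoc Hᴴ, ← hsInner_apply, Matrix.mul_smul, Matrix.mul_sub, Matrix.mul_one,
      map_smul, map_sub, smul_eq_mul]
  rw [tsallisRelEntropy, hfst, hsnd, htrace]
  ring

lemma STq_eq_tsallisRelEntropy {n : ℕ} (H : Matrix (Fin n) (Fin n) ℂ) (q : ℝ)
    (A B : Matrix (Fin n) (Fin n) ℂ) : STq H q A B = tsallisRelEntropy H q A B := by
  simp only [STq, tsallisRelEntropy, trRe, mpow, mlogq, trace_add, trace_sub, Complex.add_re,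
    Complex.sub_re, map_sub, RCLike.re_to_complex]
  ring

theorem stmt4_general {H : Matrix m n 𝕜} (hH : (1 - Hᴴ * H).PosSemidef) {q : ℝ}
    (hq : q ∈ Set.Ico (0 : ℝ) 1 ∪ Set.Ioc 1 2) :
    ConvexOn ℝ (posDefCone m 𝕜 ×ˢ posDefCone n 𝕜) fun P => tsallisRelEntropy H q P.1 P.2 := by
  obtain ⟨C, hC⟩ := exists_mul_conjTranspose_eq (posSemidef_one_sub_mul_conjTranspose hH)
  have hlin : ConvexOn ℝ (posDefCone m 𝕜 ×ˢ posDefCone n 𝕜) fun P =>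
      ((q - 1)⁻¹ - 1) * hsInner 1 P.1 + hsInner 1 P.2 := by
    refine ⟨convex_posDefCone_prod, fun P _ Q _ a b _ _ _ => le_of_eq ?_⟩
    simp only [Prod.fst_add, Prod.snd_add, Prod.smul_fst, Prod.smul_snd, map_add, map_smul,
      smul_eq_mul]
    ring
  have hC_convex : ConvexOn ℝ (posDefCone m 𝕜 ×ˢ posDefCone n 𝕜) fun P =>
      -(q - 1)⁻¹ * hsInner C (cfc (fun x : ℝ => x ^ (2 - q)) P.1 * C) :=
    ((convexOn_hsInner_rpow_mul hq C).comp_linearMap (LinearMap.fst ℝ _ (Matrix n n 𝕜))).subset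
      (fun P hP => hP.1) convex_posDefCone_prod
  refine ((hlin.add (convexOn_hsInner_rpow_mul_rpow hq H)).add hC_convex).congr fun P hP => ?_
  exact (tsallisRelEntropy_eq hC q hP.1 hP.2.1).symm

end Tsallis

/-- Joint convexity of the reduced Tsallis relative entropy for q ∈ [0,1) ∪ (1,2]. -/
theorem stmt4 {n : ℕ} (H : Matrix (Fin n) (Fin n) ℂ) (hH : (1 - Hᴴ * H).PosSemidef)
    (q : ℝ) (hq : q ∈ Set.Ico (0 : ℝ) 1 ∪ Set.Ioc 1 2)
    (A₁ A₂ B₁ B₂ : Matrix (Fin n) (Fin n) ℂ)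
    (hA₁ : A₁.PosDef) (hA₂ : A₂.PosDef) (hB₁ : B₁.PosDef) (hB₂ : B₂.PosDef)
    (t : ℝ) (ht : t ∈ Set.Icc (0 : ℝ) 1) :
    STq H q (t • A₁ + (1 - t) • A₂) (t • B₁ + (1 - t) • B₂)
      ≤ t * STq H q A₁ B₁ + (1 - t) * STq H q A₂ B₂ := by
  have h := (stmt4_general hH hq).2 (Set.mk_mem_prod hA₁ hB₁) (Set.mk_mem_prod hA₂ hB₂) ht.1
    (sub_nonneg.2 ht.2) (add_sub_cancel t 1)
  simp only [STq_eq_tsallisRelEntropy]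
  exact h
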